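/- Let u, v be positive harmonic functions on the upper half-plane ℍ, both extending continuously to an open interval γ ⊆ ℝ with u = v = 0 on γ. Then for every x ∈ γ the limit lim_{y → 0⁺} u(x, y)/v(x, y) exists, is finite and strictly positive, and equals u*_y(x, 0)/v*_y(x, 0), where u*, v* are the odd harmonic reflections across γ. Moreover the function h(x) = u*_y(x,0)/v*_y(x,0) is real analytic on γ. -/

import Mathlib

open Complex Metric Set Filter Topology

local notation "conj'" => starRingEnd ℂ

def HarmonicOnSet (u : ℂ → ℝ) (s : Set ℂ) : Prop :=
  ContinuousOn u s ∧ ∀ z ∈ s, ∀ ρ > (0 : ℝ), Metric.closedBall z ρ ⊆ s →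
    u z = (2 * Real.pi)⁻¹ *
      ∫ t in (0 : ℝ)..(2 * Real.pi), u (z + (ρ : ℂ) * Complex.exp ((t : ℂ) * Complex.I))

def UHP : Set ℂ := {z : ℂ | 0 < z.im}

noncomputable def oddReflection (v : ℂ → ℝ) (z : ℂ) : ℝ :=
  if 0 < z.im then v z else if z.im < 0 then -v (conj' z) else 0

/-!
Odd reflection preserves the mean value property: circles centred on the real axis average an odd
function to zero, and the other small circles stay in one half-plane. A continuous function with
the local mean value property is harmonic, because the maximum principle makes it a uniform limit
of real parts of polynomials on each closed disc, and Poisson's formula survives that limit. So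
`u*` and `v*` are harmonic, hence real analytic, across `γ`. On a disc in `ℍ` touching `γ` at `x`,
Harnack's inequality bounds the difference quotients of `u*` and `v*` at `x` away from zero, so the
normal derivatives are positive and `u / v` tends to their quotient.
-/

section MeanValue

open InnerProductSpace

variable {f g : ℂ → ℝ} {c z : ℂ} {R M : ℝ} {K U V : Set ℂ}

theorem circleAverage_lt_of_le_of_exists_lt (hf : ContinuousOn f (sphere c |R|))
    (hle : ∀ z ∈ sphere c |R|, f z ≤ M) (hlt : ∃ z ∈ sphere c |R|, f z < M) :
    Real.circleAverage f c R < M := by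
  obtain ⟨z, hz, hzM⟩ := hlt
  obtain ⟨θ, hθ, rfl⟩ : z ∈ circleMap c R '' Ioc 0 (2 * Real.pi) := by rwa [image_circleMap_Ioc]
  have hint : ∫ t in 0..2 * Real.pi, f (circleMap c R t) < ∫ _ in 0..2 * Real.pi, M :=
    intervalIntegral.integral_lt_integral_of_continuousOn_of_le_of_exists_lt Real.two_pi_pos
      (hf.comp_continuous (continuous_circleMap c R) (circleMap_mem_sphere' c R)).continuousOn
      continuousOn_const (fun t _ => hle _ (circleMap_mem_sphere' c R t))
      ⟨θ, Ioc_subset_Icc_self hθ, hzM⟩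
  rw [intervalIntegral.integral_const, sub_zero, smul_eq_mul] at hint
  rwa [Real.circleAverage_def, smul_eq_mul, inv_mul_lt_iff₀ Real.two_pi_pos]

theorem eventually_closedBall_subset_of_mem_nhds {α : Type*} [PseudoMetricSpace α] {z : α}
    {U : Set α} (hU : U ∈ 𝓝 z) :
    ∀ᶠ ρ in 𝓝[>] (0 : ℝ), closedBall z ρ ⊆ U := by
  obtain ⟨δ, hδ, hsub⟩ := Metric.nhds_basis_closedBall.mem_iff.1 hU
  filter_upwards [Ioo_mem_nhdsGT hδ] with ρ hρ
  exact (closedBall_subset_closedBall hρ.2.le).trans hsub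

theorem eventually_circleIntegrable_of_continuousOn (hf : ContinuousOn f U) (hU : U ∈ 𝓝 z) :
    ∀ᶠ ρ in 𝓝[>] (0 : ℝ), CircleIntegrable f z ρ := by
  filter_upwards [eventually_closedBall_subset_of_mem_nhds hU, self_mem_nhdsWithin] with ρ hsub hρ
  exact (hf.mono (sphere_subset_closedBall.trans hsub)).circleIntegrable (le_of_lt hρ)

/-- Continuity on `U` together with the mean value property on all sufficiently small circles
around each point of `U`. How small a circle has to be may depend on its centre, so this is weaker
than `HarmonicOnSet`; it is the form in which the mean value property survives reflection. -/
structure HasLocalMeanValueOn (f : ℂ → ℝ) (U : Set ℂ) : Prop where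
  continuousOn : ContinuousOn f U
  eventually_circleAverage_eq : ∀ z ∈ U, ∀ᶠ ρ in 𝓝[>] (0 : ℝ), Real.circleAverage f z ρ = f z

namespace HasLocalMeanValueOn

theorem mono (hf : HasLocalMeanValueOn f U) (hVU : V ⊆ U) : HasLocalMeanValueOn f V :=
  ⟨hf.continuousOn.mono hVU, fun z hz => hf.eventually_circleAverage_eq z (hVU hz)⟩

theorem congr (hU : IsOpen U) (hf : HasLocalMeanValueOn f U)
    (hgf : EqOn g f U) : HasLocalMeanValueOn g U := by
  refine ⟨hf.continuousOn.congr hgf, fun z hz => ?_⟩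
  filter_upwards [hf.eventually_circleAverage_eq z hz, self_mem_nhdsWithin,
    eventually_closedBall_subset_of_mem_nhds (hU.mem_nhds hz)] with ρ hfρ hρ hsub
  rw [hgf hz, ← hfρ]
  refine Real.circleAverage_congr_sphere (hgf.mono ?_)
  rw [abs_of_pos hρ]
  exact sphere_subset_closedBall.trans hsub

theorem sub (hU : IsOpen U) (hf : HasLocalMeanValueOn f U) (hg : HasLocalMeanValueOn g U) :
    HasLocalMeanValueOn (f - g) U := by
  refine ⟨hf.continuousOn.sub hg.continuousOn, fun z hz => ?_⟩
  filter_upwards [hf.eventually_circleAverage_eq z hz, hg.eventually_circleAverage_eq z hz,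
    eventually_circleIntegrable_of_continuousOn hf.continuousOn (hU.mem_nhds hz),
    eventually_circleIntegrable_of_continuousOn hg.continuousOn (hU.mem_nhds hz)]
    with ρ hfρ hgρ hfi hgi
  rw [Real.circleAverage_sub hfi hgi, hfρ, hgρ, Pi.sub_apply]

theorem of_harmonicOnNhd (hU : IsOpen U) (hf : HarmonicOnNhd f U) : HasLocalMeanValueOn f U := by
  refine ⟨hf.continuousOn, fun z hz => ?_⟩
  filter_upwards [eventually_closedBall_subset_of_mem_nhds (hU.mem_nhds hz), self_mem_nhdsWithin]
    with ρ hsub hρ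
  exact InnerProductSpace.HarmonicOnNhd.circleAverage_eq (hf.mono (by rwa [abs_of_pos hρ]))

theorem eventually_eq_of_isLocalMax (hf : HasLocalMeanValueOn f U) (hU : U ∈ 𝓝 z)
    (hmax : IsLocalMax f z) : ∀ᶠ w in 𝓝 z, f w = f z := by
  obtain ⟨δ, hδ, hδ_sub⟩ := mem_nhdsGT_iff_exists_Ioo_subset.1 <|
    (hf.eventually_circleAverage_eq z (mem_of_mem_nhds hU)).and
      (eventually_closedBall_subset_of_mem_nhds (inter_mem hU hmax))
  filter_upwards [ball_mem_nhds z hδ] with w hw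
  rcases eq_or_ne w z with rfl | hwz
  · rfl
  obtain ⟨havg, hsub⟩ := hδ_sub ⟨dist_pos.2 hwz, hw⟩
  have hsphere : sphere z |dist w z| ⊆ U ∩ {w | f w ≤ f z} := by
    rw [abs_of_nonneg dist_nonneg]
    exact sphere_subset_closedBall.trans hsub
  have hwS : w ∈ sphere z |dist w z| := by rw [abs_of_nonneg dist_nonneg]; exact rfl
  by_contra hne
  exact havg.not_lt <| circleAverage_lt_of_le_of_exists_lt
    (hf.continuousOn.mono fun ζ hζ => (hsphere hζ).1) (fun ζ hζ => (hsphere hζ).2)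
    ⟨w, hwS, lt_of_le_of_ne (hsphere hwS).2 hne⟩

theorem le_of_forall_frontier_le (hK : IsCompact K) (hfK : ContinuousOn f K)
    (hf : HasLocalMeanValueOn f (interior K)) (hM : ∀ z ∈ frontier K, f z ≤ M) :
    ∀ z ∈ K, f z ≤ M := by
  intro z hz
  obtain ⟨p, hpK, hp⟩ := hK.exists_isMaxOn ⟨z, hz⟩ hfK
  -- A maximum point of largest real part cannot be interior, since `f` is constant around it.
  have hmaximisers : IsCompact (K ∩ f ⁻¹' {f p}) := hK.of_isClosed_subset
    (hfK.preimage_isClosed_of_isClosed hK.isClosed isClosed_singleton) inter_subset_left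
  obtain ⟨q, ⟨hqK, hqp : f q = f p⟩, hq⟩ :=
    hmaximisers.exists_isMaxOn ⟨p, hpK, rfl⟩ continuous_re.continuousOn
  have hq_frontier : q ∈ frontier K := by
    refine ⟨subset_closure hqK, fun hq_int => ?_⟩
    have hK_nhds : K ∈ 𝓝 q := mem_interior_iff_mem_nhds.1 hq_int
    have hconst : ∀ᶠ w in 𝓝 q, f w = f q :=
      hf.eventually_eq_of_isLocalMax (isOpen_interior.mem_nhds hq_int) <| by
        filter_upwards [hK_nhds] with w hw using hqp ▸ hp hw
    obtain ⟨δ, hδ, hball⟩ := Metric.nhds_basis_closedBall.mem_iff.1 (inter_mem hconst hK_nhds)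
    obtain ⟨heq, hmem⟩ : f (q + δ) = f q ∧ q + δ ∈ K := hball (by simp [abs_of_pos hδ])
    have hre : (q + δ).re ≤ q.re := hq ⟨hmem, heq.trans hqp⟩
    rw [add_re, ofReal_re] at hre
    linarith [show 0 < δ from hδ]
  exact (hp hz).trans (hqp ▸ hM q hq_frontier)

end HasLocalMeanValueOn

theorem abs_sub_le_of_forall_frontier_abs_sub_le (hK : IsCompact K)
    (hfK : ContinuousOn f K) (hgK : ContinuousOn g K)
    (hf : HasLocalMeanValueOn f (interior K)) (hg : HasLocalMeanValueOn g (interior K))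
    (hM : ∀ z ∈ frontier K, |f z - g z| ≤ M) : ∀ z ∈ K, |f z - g z| ≤ M := by
  intro z hz
  have hfg : f z - g z ≤ M := (hf.sub isOpen_interior hg).le_of_forall_frontier_le hK
    (hfK.sub hgK) (fun w hw => (le_abs_self _).trans (hM w hw)) z hz
  have hgf : g z - f z ≤ M := (hg.sub isOpen_interior hf).le_of_forall_frontier_le hK
    (hgK.sub hfK) (fun w hw => (le_abs_self _).trans (abs_sub_comm (f w) (g w) ▸ hM w hw)) z hz
  exact abs_sub_le_iff.2 ⟨hfg, hgf⟩

end MeanValue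

section Dirichlet

open InnerProductSpace Polynomial

variable {f : ℂ → ℝ} {c : ℂ} {R ε : ℝ}

theorem exists_polynomial_re_eq_of_mem_span_fourier {T : ℝ} {q : C(AddCircle T, ℂ)}
    (hq : q ∈ Submodule.span ℂ (range (@fourier T))) :
    ∃ P : ℂ[X], ∀ x, (q x).re = (P.eval (x.toCircle : ℂ)).re := by
  -- On the unit circle `Re (a z⁻ⁿ) = Re (conj a zⁿ)`; quantifying over the factor `a` makes the
  -- claim stable under complex scalars.
  suffices ∀ a : ℂ, ∃ P : ℂ[X], ∀ x, (a * q x).re = (P.eval (x.toCircle : ℂ)).re by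
    simpa only [one_mul] using this 1
  induction hq using Submodule.span_induction with
  | mem q h =>
    obtain ⟨n, rfl⟩ := h
    intro a
    obtain ⟨k, rfl | rfl⟩ := n.eq_nat_or_neg
    · exact ⟨C a * X ^ k, fun x => by simp [fourier_apply, AddCircle.toCircle_nsmul]⟩
    · refine ⟨C (conj' a) * X ^ k, fun x => ?_⟩
      rw [fourier_neg, fourier_apply, natCast_zsmul, AddCircle.toCircle_nsmul, ← conj_re]
      simp
  | zero => exact fun a => ⟨0, by simp⟩
  | add q₁ q₂ _ _ h₁ h₂ =>
    intro a
    obtain ⟨P₁, hP₁⟩ := h₁ a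
    obtain ⟨P₂, hP₂⟩ := h₂ a
    exact ⟨P₁ + P₂, fun x => by
      rw [ContinuousMap.add_apply, mul_add, add_re, hP₁, hP₂, eval_add, add_re]⟩
  | smul b q _ h =>
    intro a
    obtain ⟨P, hP⟩ := h (a * b)
    exact ⟨P, fun x => by rw [ContinuousMap.smul_apply, smul_eq_mul, ← mul_assoc, hP]⟩

theorem exists_polynomial_re_near_on_unitCircle {φ : ℂ → ℝ} (hφ : ContinuousOn φ (sphere 0 1))
    (hε : 0 < ε) : ∃ P : ℂ[X], ∀ z ∈ sphere (0 : ℂ) 1, |φ z - (P.eval z).re| ≤ ε := by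
  let ψ : C(UnitAddCircle, ℂ) := ⟨fun x => (φ x.toCircle : ℂ), continuous_ofReal.comp <|
    hφ.comp_continuous (continuous_subtype_val.comp AddCircle.continuous_toCircle)
      fun x => mem_sphere_zero_iff_norm.2 (Circle.norm_coe _)⟩
  have hψ : ψ ∈ closure (Submodule.span ℂ (range (@fourier 1)) : Set C(UnitAddCircle, ℂ)) := by
    rw [← Submodule.topologicalClosure_coe, span_fourier_closure_eq_top]
    trivial
  obtain ⟨q, hq, hψq⟩ := Metric.mem_closure_iff.1 hψ ε hε
  obtain ⟨P, hP⟩ := exists_polynomial_re_eq_of_mem_span_fourier hq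
  refine ⟨P, fun z hz => ?_⟩
  obtain ⟨x, hx⟩ := (AddCircle.homeomorphCircle one_ne_zero).surjective ⟨z, hz⟩
  have hxz : (x.toCircle : ℂ) = z := by rw [← AddCircle.homeomorphCircle_apply one_ne_zero, hx]
  calc |φ z - (P.eval z).re| = |(ψ x - q x).re| := by rw [← hxz, ← hP, sub_re]; rfl
    _ ≤ ‖ψ x - q x‖ := abs_re_le_norm _
    _ ≤ ε := by rw [← dist_eq_norm]; exact (ContinuousMap.dist_apply_le_dist x).trans hψq.le

theorem exists_polynomial_re_near_on_sphere (hR : 0 < R) (hf : ContinuousOn f (sphere c R))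
    (hε : 0 < ε) : ∃ P : ℂ[X], ∀ z ∈ sphere c R, |f z - (P.eval z).re| ≤ ε := by
  have hR' : (R : ℂ) ≠ 0 := ofReal_ne_zero.2 hR.ne'
  obtain ⟨P, hP⟩ := exists_polynomial_re_near_on_unitCircle (φ := fun ζ => f (c + R * ζ))
    (hf.comp (by fun_prop) fun ζ hζ => by simpa [abs_of_pos hR, hR.ne'] using hζ) hε
  refine ⟨P.comp (C (R : ℂ)⁻¹ * (X - C c)), fun z hz => ?_⟩
  have hζ : (R : ℂ)⁻¹ * (z - c) ∈ sphere (0 : ℂ) 1 := by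
    rw [mem_sphere_zero_iff_norm, norm_mul, norm_inv, norm_real, Real.norm_of_nonneg hR.le,
      mem_sphere_iff_norm.1 hz, inv_mul_cancel₀ hR.ne']
  simpa [mul_inv_cancel_left₀ hR'] using hP _ hζ

theorem harmonicOnNhd_re_eval (P : ℂ[X]) (U : Set ℂ) :
    HarmonicOnNhd (fun z => (P.eval z).re) U :=
  fun z _ => (P.differentiable.analyticAt z).harmonicAt_re

theorem HasLocalMeanValueOn.exists_polynomial_re_near (hR : 0 < R)
    (hf : HasLocalMeanValueOn f (ball c R)) (hfc : ContinuousOn f (closedBall c R)) (hε : 0 < ε) :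
    ∃ P : ℂ[X], ∀ z ∈ closedBall c R, |f z - (P.eval z).re| ≤ ε := by
  obtain ⟨P, hP⟩ := exists_polynomial_re_near_on_sphere hR (hfc.mono sphere_subset_closedBall) hε
  refine ⟨P, abs_sub_le_of_forall_frontier_abs_sub_le (isCompact_closedBall c R) hfc
    (harmonicOnNhd_re_eval P _).continuousOn ?_ ?_ ?_⟩
  · rwa [interior_closedBall c hR.ne']
  · exact .of_harmonicOnNhd isOpen_interior (harmonicOnNhd_re_eval P _)
  · rwa [frontier_closedBall c hR.ne']

end Dirichlet

section Poisson

open InnerProductSpace Polynomial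

variable {f g : ℂ → ℝ} {c w : ℂ} {R : ℝ} {U : Set ℂ}

theorem continuousOn_poissonKernel_sphere (hw : w ∈ ball c R) :
    ContinuousOn (poissonKernel c w) (sphere c R) := by
  rw [poissonKernel_eq_re_herglotzRieszKernel]
  exact continuous_re.comp_continuousOn <|
    abs_of_pos (pos_of_mem_ball hw) ▸ continuousOn_herglotzRieszKernel_sphere hw

theorem le_poissonKernel_of_mem_sphere {z : ℂ} (hz : z ∈ sphere c R) (hw : w ∈ ball c R) :
    (R - ‖w - c‖) / (R + ‖w - c‖) ≤ poissonKernel c w z := by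
  rw [poissonKernel_eq_re_herglotzRieszKernel]
  exact le_re_herglotzRieszKernel hz hw

theorem poissonKernel_nonneg_of_mem_sphere {z : ℂ} (hz : z ∈ sphere c R) (hw : w ∈ ball c R) :
    0 ≤ poissonKernel c w z := by
  have hwR : ‖w - c‖ < R := mem_ball_iff_norm.1 hw
  exact (div_nonneg (by linarith) (by positivity [pos_of_mem_ball hw])).trans
    (le_poissonKernel_of_mem_sphere hz hw)

theorem circleIntegrable_poissonKernel_smul (hw : w ∈ ball c R)
    (hf : ContinuousOn f (sphere c R)) : CircleIntegrable (poissonKernel c w • f) c R :=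
  ((continuousOn_poissonKernel_sphere hw).smul hf).circleIntegrable (pos_of_mem_ball hw).le

theorem circleAverage_poissonKernel_smul_mono (hw : w ∈ ball c R)
    (hf : ContinuousOn f (sphere c R)) (hg : ContinuousOn g (sphere c R))
    (hfg : ∀ z ∈ sphere c R, f z ≤ g z) :
    Real.circleAverage (poissonKernel c w • f) c R ≤
      Real.circleAverage (poissonKernel c w • g) c R := by
  refine Real.circleAverage_mono (circleIntegrable_poissonKernel_smul hw hf)
    (circleIntegrable_poissonKernel_smul hw hg) fun z hz => ?_
  rw [abs_of_pos (pos_of_mem_ball hw)] at hz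
  exact mul_le_mul_of_nonneg_left (hfg z hz) (poissonKernel_nonneg_of_mem_sphere hz hw)

theorem HasLocalMeanValueOn.circleAverage_poissonKernel_smul
    (hf : HasLocalMeanValueOn f (ball c R)) (hfc : ContinuousOn f (closedBall c R))
    (hw : w ∈ ball c R) : Real.circleAverage (poissonKernel c w • f) c R = f w := by
  have hfS : ContinuousOn f (sphere c R) := hfc.mono sphere_subset_closedBall
  have hpoly (P : ℂ[X]) :
      Real.circleAverage (poissonKernel c w • fun z => (P.eval z).re) c R = (P.eval w).re :=
    (harmonicOnNhd_re_eval P _).circleAverage_poissonKernel_smul hw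
  refine eq_of_forall_dist_le fun ε hε => ?_
  obtain ⟨P, hP⟩ := hf.exists_polynomial_re_near (pos_of_mem_ball hw) hfc (half_pos hε)
  have hPw := abs_le.1 (hP w (ball_subset_closedBall hw))
  have hupper := circleAverage_poissonKernel_smul_mono hw hfS
    (harmonicOnNhd_re_eval (P + C ((ε / 2 : ℝ) : ℂ)) _).continuousOn fun z hz => by
      rw [eval_add, eval_C, add_re, ofReal_re]
      linarith [(abs_le.1 (hP z (sphere_subset_closedBall hz))).2]
  have hlower := circleAverage_poissonKernel_smul_mono hw
    (harmonicOnNhd_re_eval (P - C ((ε / 2 : ℝ) : ℂ)) _).continuousOn hfS fun z hz => by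
      rw [eval_sub, eval_C, sub_re, ofReal_re]
      linarith [(abs_le.1 (hP z (sphere_subset_closedBall hz))).1]
  rw [hpoly, eval_add, eval_C, add_re, ofReal_re] at hupper
  rw [hpoly, eval_sub, eval_C, sub_re, ofReal_re] at hlower
  rw [Real.dist_eq, abs_le]
  constructor <;> linarith

theorem harmonicOnNhd_circleAverage_poissonKernel_smul (hf : CircleIntegrable f c R) :
    HarmonicOnNhd (fun w => Real.circleAverage (poissonKernel c w • f) c R) (ball c R) := by
  have hcentre (w : ℂ) : Real.circleAverage (poissonKernel c w • f) c R =
      Real.circleAverage ((re ∘ herglotzRieszKernel 0 (w - c)) • fun z => f (z + c)) 0 R := by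
    rw [← Real.circleAverage_map_add_const, poissonKernel_eq_re_herglotzRieszKernel]
    simp only [Pi.smul_apply', Function.comp_apply, herglotzRieszKernel_add_const]
    rfl
  have hf₀ : CircleIntegrable (fun z => f (z + c)) 0 R := by
    simpa [CircleIntegrable, circleMap, add_comm] using hf
  have hanalytic : AnalyticOnNhd ℂ (fun w => Real.circleAverage
      (fun z => herglotzRieszKernel 0 w z • (f (z + c) : ℂ)) 0 R) (ball 0 R) :=
    analyticOnNhd_circleAverage_herglotzRieszKernel_smul ⟨hf₀.1.ofReal, hf₀.2.ofReal⟩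
  intro p hp
  have hmem {w : ℂ} (hw : w ∈ ball c R) : w - c ∈ ball 0 R := by
    rwa [mem_ball_zero_iff, ← mem_ball_iff_norm]
  have hp_analytic := (hanalytic (p - c) (hmem hp)).comp
    (f := fun w => w - c) (analyticAt_id.sub analyticAt_const)
  refine (harmonicAt_congr_nhds ?_).1 hp_analytic.harmonicAt_re
  filter_upwards [isOpen_ball.mem_nhds hp] with w hw
  rw [hcentre]
  exact re_circleAverage_herglotzRieszKernel_smul hf₀ (hmem hw)

theorem HasLocalMeanValueOn.harmonicOnNhd (hU : IsOpen U) (hf : HasLocalMeanValueOn f U) :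
    HarmonicOnNhd f U := by
  intro z hz
  obtain ⟨R, hR, hsub⟩ := Metric.nhds_basis_closedBall.mem_iff.1 (hU.mem_nhds hz)
  have hfc : ContinuousOn f (closedBall z R) := hf.continuousOn.mono hsub
  have hPoisson : HarmonicAt (fun w => Real.circleAverage (poissonKernel z w • f) z R) z :=
    harmonicOnNhd_circleAverage_poissonKernel_smul
      ((hfc.mono sphere_subset_closedBall).circleIntegrable hR.le) z (mem_ball_self hR)
  refine (harmonicAt_congr_nhds ?_).1 hPoisson
  filter_upwards [ball_mem_nhds z hR] with w hw
  exact (hf.mono (ball_subset_closedBall.trans hsub)).circleAverage_poissonKernel_smul hfc hw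

end Poisson

section Harnack

open InnerProductSpace

variable {f : ℂ → ℝ} {c w p : ℂ} {R : ℝ}

theorem harnack_le_of_nonneg_on_sphere (hf : HarmonicContOnCl f (ball c R))
    (hnonneg : ∀ z ∈ sphere c R, 0 ≤ f z) (hw : w ∈ ball c R) :
    (R - ‖w - c‖) / (R + ‖w - c‖) * f c ≤ f w := by
  have hR : 0 < R := pos_of_mem_ball hw
  have hfS : ContinuousOn f (sphere c R) := hf.continuousOn_ball.mono sphere_subset_closedBall
  have hmean : Real.circleAverage f c R = f c :=
    InnerProductSpace.HarmonicContOnCl.circleAverage_eq ((abs_of_pos hR).symm ▸ hf)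
  rw [← hf.circleAverage_poissonKernel_smul hw, ← hmean, ← smul_eq_mul, ← Real.circleAverage_smul]
  refine Real.circleAverage_mono (hfS.circleIntegrable hR.le).const_smul
    (circleIntegrable_poissonKernel_smul hw hfS) fun z hz => ?_
  rw [abs_of_pos hR] at hz
  exact mul_le_mul_of_nonneg_right (le_poissonKernel_of_mem_sphere hz hw) (hnonneg z hz)

theorem hopf_fderiv_pos {f' : ℂ →L[ℝ] ℝ} (hf : HarmonicContOnCl f (ball c R))
    (hnonneg : ∀ z ∈ sphere c R, 0 ≤ f z) (hfc : 0 < f c) (hp : p ∈ sphere c R) (hfp : f p = 0)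
    (hf' : HasFDerivAt f f' p) : 0 < f' (c - p) := by
  have hnorm : ‖c - p‖ = R := by rwa [mem_sphere', dist_eq_norm] at hp
  have hR : 0 < R := by
    rw [← hnorm, norm_pos_iff, sub_ne_zero]
    rintro rfl
    exact hfc.ne' hfp
  -- At `p + t (c - p)` the Harnack factor is `t / (2 - t)`, which is at least `t / 2`.
  have hquot : ∀ᶠ t : ℝ in 𝓝[>] 0, f c / 2 ≤ t⁻¹ • (f (p + t • (c - p)) - f p) := by
    filter_upwards [Ioo_mem_nhdsGT one_pos] with t ht
    have hdist : ‖p + t • (c - p) - c‖ = (1 - t) * R := by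
      rw [show p + t • (c - p) - c = -((1 - t) • (c - p)) by module, norm_neg, norm_smul,
        Real.norm_of_nonneg (by linarith [ht.2]), hnorm]
    have hharnack := harnack_le_of_nonneg_on_sphere hf hnonneg (w := p + t • (c - p)) <| by
      rw [mem_ball_iff_norm, hdist]
      nlinarith [ht.1]
    rw [hfp, sub_zero, smul_eq_mul, inv_mul_eq_div, le_div_iff₀ ht.1]
    calc f c / 2 * t = t / 2 * f c := by ring
      _ ≤ t / (2 - t) * f c := by
        gcongr
        · exact ht.1.le
        · linarith [ht.2]
        · linarith [ht.1]
      _ = (R - ‖p + t • (c - p) - c‖) / (R + ‖p + t • (c - p) - c‖) * f c := by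
        rw [hdist, show R - (1 - t) * R = R * t by ring,
          show R + (1 - t) * R = R * (2 - t) by ring, mul_div_mul_left _ _ hR.ne']
      _ ≤ f (p + t • (c - p)) := hharnack
  have htendsto := (hf'.hasLineDerivAt (c - p)).tendsto_slope_zero_right
  exact (half_pos hfc).trans_le (ge_of_tendsto htendsto hquot)

end Harnack

section Reflection

open InnerProductSpace

variable {w : ℂ → ℝ} {z : ℂ} {U : Set ℂ} {γ : Set ℝ}

theorem HarmonicOnSet.hasLocalMeanValueOn (hU : IsOpen U) (hw : HarmonicOnSet w U) :
    HasLocalMeanValueOn w U := by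
  refine ⟨hw.1, fun z hz => ?_⟩
  filter_upwards [eventually_closedBall_subset_of_mem_nhds (hU.mem_nhds hz), self_mem_nhdsWithin]
    with ρ hsub hρ
  exact (hw.2 z hz ρ hρ hsub).symm

theorem circleAverage_comp_conj {E : Type*} [NormedAddCommGroup E] [NormedSpace ℝ E] (f : ℂ → E)
    (c : ℂ) (R : ℝ) :
    Real.circleAverage (fun z => f (conj' z)) c R = Real.circleAverage f (conj' c) R := by
  have hperiodic : Function.Periodic (fun t => f (circleMap (conj' c) R t)) (2 * Real.pi) :=
    fun t => by simp only [periodic_circleMap (conj' c) R t]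
  simp only [Real.circleAverage_def, conj_circleMap]
  rw [intervalIntegral.integral_comp_neg (fun t => f (circleMap (conj' c) R t)), neg_zero]
  simpa using congrArg ((2 * Real.pi)⁻¹ • ·)
    (hperiodic.intervalIntegral_add_eq (-(2 * Real.pi)) 0)

theorem isOpen_UHP : IsOpen UHP :=
  isOpen_lt continuous_const continuous_im

theorem eqOn_oddReflection_UHP (w : ℂ → ℝ) : EqOn (oddReflection w) w UHP :=
  fun _ hz => if_pos hz

theorem oddReflection_of_im_eq_zero (w : ℂ → ℝ) (hz : z.im = 0) : oddReflection w z = 0 := by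
  simp [oddReflection, hz]

theorem oddReflection_conj (w : ℂ → ℝ) (z : ℂ) :
    oddReflection w (conj' z) = -oddReflection w z := by
  rcases lt_trichotomy z.im 0 with h | h | h
  · simp [oddReflection, h, h.not_gt]
  · simp [oddReflection, h]
  · simp [oddReflection, h, h.not_gt]

theorem circleAverage_oddReflection_conj (w : ℂ → ℝ) (z : ℂ) (ρ : ℝ) :
    Real.circleAverage (oddReflection w) (conj' z) ρ =
      -Real.circleAverage (oddReflection w) z ρ := by
  rw [← circleAverage_comp_conj]
  simp only [oddReflection_conj, Real.circleAverage_def, intervalIntegral.integral_neg, smul_neg]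

theorem oddReflection_eq_neg_comp_conj (w : ℂ → ℝ) :
    oddReflection w = fun z => -oddReflection w (conj' z) := by
  ext z
  rw [oddReflection_conj, neg_neg]

theorem continuousAt_oddReflection_of_conj (hw : ContinuousAt (oddReflection w) (conj' z)) :
    ContinuousAt (oddReflection w) z := by
  rw [oddReflection_eq_neg_comp_conj]
  exact (hw.comp' continuous_conj.continuousAt).neg

theorem continuousAt_oddReflection_of_tendsto (hz : z.im = 0) (hw : Tendsto w (𝓝[UHP] z) (𝓝 0)) :
    ContinuousAt (oddReflection w) z := by
  have hz_conj : conj' z = z := conj_eq_iff_im.2 hz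
  have hupper : Tendsto (oddReflection w) (𝓝[UHP] z) (𝓝 0) :=
    hw.congr' (eqOn_oddReflection_UHP w).symm.eventuallyEq_nhdsWithin
  have hlower : Tendsto (oddReflection w) (𝓝[conj' ⁻¹' UHP] z) (𝓝 0) := by
    have hconj : Tendsto conj' (𝓝[conj' ⁻¹' UHP] z) (𝓝[UHP] z) :=
      tendsto_nhdsWithin_iff.2 ⟨(hz_conj ▸ continuous_conj.tendsto z).mono_left inf_le_left,
        self_mem_nhdsWithin⟩
    rw [oddReflection_eq_neg_comp_conj, ← neg_zero]
    exact (hupper.comp hconj).neg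
  have hreal : Tendsto (oddReflection w) (𝓝[{ζ | ζ.im = 0}] z) (𝓝 0) :=
    tendsto_const_nhds.congr' <| by
      filter_upwards [self_mem_nhdsWithin] with ζ hζ using (oddReflection_of_im_eq_zero w hζ).symm
  have hcover : UHP ∪ conj' ⁻¹' UHP ∪ {ζ | ζ.im = 0} = univ := by
    ext ζ
    simp only [UHP, mem_union, mem_preimage, mem_ofPred_eq, conj_im, neg_pos, mem_univ, iff_true]
    rcases lt_trichotomy ζ.im 0 with h | h | h <;> simp [h]
  rw [ContinuousAt, oddReflection_of_im_eq_zero w hz, ← nhdsWithin_univ, ← hcover,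
    nhdsWithin_union, nhdsWithin_union]
  exact (hupper.sup hlower).sup hreal

/-- The domain `ℍ ∪ γ ∪ ℍ⁻` of the odd reflection across a set `γ` of real points. -/
def reflectionDomain (γ : Set ℝ) : Set ℂ := {z | z.im = 0 → z.re ∈ γ}

theorem isOpen_reflectionDomain (hγ : IsOpen γ) : IsOpen (reflectionDomain γ) := by
  simp only [reflectionDomain, imp_iff_not_or]
  exact (isOpen_ne_fun continuous_im continuous_const).union (hγ.preimage continuous_re)

theorem HarmonicOnSet.hasLocalMeanValueOn_oddReflection (hw : HarmonicOnSet w UHP)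
    (hγ : ∀ x ∈ γ, Tendsto w (𝓝[UHP] (x : ℂ)) (𝓝 0)) :
    HasLocalMeanValueOn (oddReflection w) (reflectionDomain γ) := by
  have hUHP : HasLocalMeanValueOn (oddReflection w) UHP :=
    (hw.hasLocalMeanValueOn isOpen_UHP).congr isOpen_UHP (eqOn_oddReflection_UHP w)
  have hcont {z : ℂ} (hz : z ∈ UHP) : ContinuousAt (oddReflection w) z :=
    hUHP.continuousOn.continuousAt (isOpen_UHP.mem_nhds hz)
  have hconj {z : ℂ} (hz : z.im < 0) : conj' z ∈ UHP := by simpa [UHP] using hz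
  refine ⟨fun z hz => ContinuousAt.continuousWithinAt ?_, fun z _ => ?_⟩
  · rcases lt_trichotomy z.im 0 with hneg | hzero | hpos
    · exact continuousAt_oddReflection_of_conj (hcont (hconj hneg))
    · have hz_re : (z.re : ℂ) = z := Complex.ext rfl hzero.symm
      exact continuousAt_oddReflection_of_tendsto hzero (hz_re ▸ hγ z.re (hz hzero))
    · exact hcont hpos
  · rcases lt_trichotomy z.im 0 with hneg | hzero | hpos
    · filter_upwards [hUHP.eventually_circleAverage_eq _ (hconj hneg)] with ρ hρ
      rwa [circleAverage_oddReflection_conj, oddReflection_conj, neg_inj] at hρ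
    · refine .of_forall fun ρ => ?_
      have hodd := circleAverage_oddReflection_conj w z ρ
      rw [conj_eq_iff_im.2 hzero, self_eq_neg] at hodd
      rw [hodd, oddReflection_of_im_eq_zero w hzero]
    · exact hUHP.eventually_circleAverage_eq z hpos

theorem HarmonicOnSet.harmonicOnNhd_oddReflection (hw : HarmonicOnSet w UHP) (hγ : IsOpen γ)
    (hw₀ : ∀ x ∈ γ, Tendsto w (𝓝[UHP] (x : ℂ)) (𝓝 0)) :
    HarmonicOnNhd (oddReflection w) (reflectionDomain γ) :=
  (hw.hasLocalMeanValueOn_oddReflection hw₀).harmonicOnNhd (isOpen_reflectionDomain hγ)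

end Reflection

section BoundaryDerivative

open InnerProductSpace

variable {E : Type*} [NormedAddCommGroup E] [NormedSpace ℝ E] {f : ℂ → E}
  {w : ℂ → ℝ} {x : ℝ} {γ : Set ℝ}

theorem hasDerivAt_vertical {z : ℂ} (hf : DifferentiableAt ℝ f z) :
    HasDerivAt (fun y : ℝ => f (z + y * I)) (fderiv ℝ f z I) 0 := by
  simpa only [HasLineDerivAt, real_smul] using hf.hasFDerivAt.hasLineDerivAt I

theorem analyticAt_deriv_vertical [CompleteSpace E] (hf : AnalyticAt ℝ f x) :
    AnalyticAt ℝ (fun t : ℝ => deriv (fun y : ℝ => f (t + y * I)) 0) x := by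
  have hfderiv : AnalyticAt ℝ (fun t : ℝ => fderiv ℝ f t I) x :=
    (ContinuousLinearMap.apply ℝ E I).analyticAt _ |>.comp <|
      hf.fderiv.comp (f := fun t : ℝ => (t : ℂ)) (ofRealCLM.analyticAt x)
  have hanalytic : ∀ᶠ t : ℝ in 𝓝 x, AnalyticAt ℝ f t :=
    continuous_ofReal.continuousAt.eventually hf.eventually_analyticAt
  refine hfderiv.congr ?_
  filter_upwards [hanalytic] with t ht using (hasDerivAt_vertical ht.differentiableAt).deriv.symm

theorem tendsto_div_of_hasDerivAt_of_eq_zero {𝕜 : Type*} [NontriviallyNormedField 𝕜]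
    {f g : 𝕜 → 𝕜} {f' g' a : 𝕜} (hf : HasDerivAt f f' a) (hg : HasDerivAt g g' a)
    (hfa : f a = 0) (hga : g a = 0) (hg' : g' ≠ 0) :
    Tendsto (fun x => f x / g x) (𝓝[≠] a) (𝓝 (f' / g')) := by
  refine (hf.tendsto_slope.div hg.tendsto_slope hg').congr' ?_
  filter_upwards [self_mem_nhdsWithin] with x hx
  simp only [Pi.div_apply, slope_def_field, hfa, hga, sub_zero]
  exact div_div_div_cancel_right₀ (sub_ne_zero.2 hx) _ _

theorem oddReflection_vertical_eventuallyEq (w : ℂ → ℝ) (x : ℝ) :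
    (fun y : ℝ => oddReflection w (x + y * I)) =ᶠ[𝓝[>] 0] fun y : ℝ => w (x + y * I) := by
  filter_upwards [self_mem_nhdsWithin] with y (hy : 0 < y)
  exact eqOn_oddReflection_UHP w (show 0 < (x + y * I).im by simpa using hy)

theorem closedBall_subset_insert_UHP (x r : ℝ) : closedBall (x + r * I) r ⊆ insert ↑x UHP := by
  intro z hz
  have hr : 0 ≤ r := nonempty_closedBall.1 ⟨z, hz⟩
  have hsq : (z.re - x) ^ 2 + (z.im - r) ^ 2 ≤ r ^ 2 := by
    have hnorm := pow_le_pow_left₀ (norm_nonneg _) (mem_closedBall_iff_norm.1 hz) 2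
    rwa [← normSq_eq_norm_sq, normSq_apply, ← sq, ← sq, sub_re, sub_im, add_re, add_im, ofReal_re,
      ofReal_im, re_ofReal_mul, im_ofReal_mul, I_re, I_im, mul_zero, add_zero, mul_one,
      zero_add] at hnorm
  refine or_iff_not_imp_right.2 fun hz_im => ?_
  have him : z.im ≤ 0 := not_lt.1 hz_im
  refine Complex.ext (?_ : z.re = x) (?_ : z.im = 0) <;> nlinarith

theorem HarmonicOnSet.analyticAt_oddReflection (hw : HarmonicOnSet w UHP) (hγ : IsOpen γ)
    (hw₀ : ∀ x ∈ γ, Tendsto w (𝓝[UHP] (x : ℂ)) (𝓝 0)) (hx : x ∈ γ) :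
    AnalyticAt ℝ (oddReflection w) x :=
  HarmonicAt.analyticAt (hw.harmonicOnNhd_oddReflection hγ hw₀ x fun _ => hx)

theorem HarmonicOnSet.fderiv_oddReflection_pos (hw : HarmonicOnSet w UHP)
    (hpos : ∀ z ∈ UHP, 0 < w z) (hγ : IsOpen γ)
    (hw₀ : ∀ x ∈ γ, Tendsto w (𝓝[UHP] (x : ℂ)) (𝓝 0)) (hx : x ∈ γ) :
    0 < fderiv ℝ (oddReflection w) x I := by
  have hharm := hw.harmonicOnNhd_oddReflection hγ hw₀
  have hpos' {z : ℂ} (hz : z ∈ UHP) : 0 < oddReflection w z :=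
    (hpos z hz).trans_eq (eqOn_oddReflection_UHP w hz).symm
  have hdisc : closedBall (x + I) 1 ⊆ insert ↑x UHP := by
    simpa using closedBall_subset_insert_UHP x 1
  have hdomain : closure (ball (x + I) 1) ⊆ reflectionDomain γ := by
    intro z hz
    rcases hdisc (closure_ball_subset_closedBall hz) with rfl | hz
    · exact fun _ => hx
    · exact fun hz_im => absurd hz_im (ne_of_gt hz)
  have hnonneg : ∀ z ∈ sphere (x + I) 1, 0 ≤ oddReflection w z := by
    intro z hz
    rcases hdisc (sphere_subset_closedBall hz) with rfl | hz
    · exact (oddReflection_of_im_eq_zero w (ofReal_im x)).ge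
    · exact (hpos' hz).le
  have hx_deriv : HasFDerivAt (oddReflection w) (fderiv ℝ (oddReflection w) x) x :=
    (hw.analyticAt_oddReflection hγ hw₀ hx).differentiableAt.hasFDerivAt
  simpa using hopf_fderiv_pos (hharm.mono hdomain).harmonicContOnCl hnonneg
    (hpos' (by simp [UHP])) (by simp) (oddReflection_of_im_eq_zero w (ofReal_im x)) hx_deriv

end BoundaryDerivative

/-- For positive harmonic `u, v` on `ℍ` vanishing continuously on `(a,b) ⊆ ℝ`,
the ratio `u/v` has a finite positive limit at each point of `(a,b)`, equal to
the ratio of the normal derivatives of the odd reflections, and this ratio is a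
real analytic function of the boundary point. -/
theorem stmt_10 (u v : ℂ → ℝ) (a b : ℝ) (hab : a < b)
    (hu : HarmonicOnSet u UHP) (hv : HarmonicOnSet v UHP)
    (hupos : ∀ z ∈ UHP, 0 < u z) (hvpos : ∀ z ∈ UHP, 0 < v z)
    (hubdry : ∀ x ∈ Set.Ioo a b, Tendsto u (nhdsWithin (x : ℂ) UHP) (nhds 0))
    (hvbdry : ∀ x ∈ Set.Ioo a b, Tendsto v (nhdsWithin (x : ℂ) UHP) (nhds 0)) :
    (∀ x ∈ Set.Ioo a b, ∃ du dv : ℝ, 0 < du ∧ 0 < dv ∧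
      HasDerivAt (fun y : ℝ => oddReflection u ((x : ℂ) + (y : ℂ) * Complex.I)) du 0 ∧
      HasDerivAt (fun y : ℝ => oddReflection v ((x : ℂ) + (y : ℂ) * Complex.I)) dv 0 ∧
      Tendsto (fun y : ℝ => u ((x : ℂ) + (y : ℂ) * Complex.I) /
          v ((x : ℂ) + (y : ℂ) * Complex.I))
        (𝓝[>] (0 : ℝ)) (nhds (du / dv))) ∧
    AnalyticOnNhd ℝ
      (fun x : ℝ =>
        deriv (fun y : ℝ => oddReflection u ((x : ℂ) + (y : ℂ) * Complex.I)) 0 /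
        deriv (fun y : ℝ => oddReflection v ((x : ℂ) + (y : ℂ) * Complex.I)) 0)
      (Set.Ioo a b) := by
  have hreal (w : ℂ → ℝ) (x : ℝ) : oddReflection w (x + (0 : ℝ) * I) = 0 :=
    oddReflection_of_im_eq_zero w (by simp)
  have hu_analytic {x : ℝ} (hx : x ∈ Ioo a b) : AnalyticAt ℝ (oddReflection u) x :=
    hu.analyticAt_oddReflection isOpen_Ioo hubdry hx
  have hv_analytic {x : ℝ} (hx : x ∈ Ioo a b) : AnalyticAt ℝ (oddReflection v) x :=
    hv.analyticAt_oddReflection isOpen_Ioo hvbdry hx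
  have hdv_pos {x : ℝ} (hx : x ∈ Ioo a b) : 0 < fderiv ℝ (oddReflection v) x I :=
    hv.fderiv_oddReflection_pos hvpos isOpen_Ioo hvbdry hx
  refine ⟨fun x hx => ?_, fun x hx => ?_⟩
  · have hdu := hasDerivAt_vertical (hu_analytic hx).differentiableAt
    have hdv := hasDerivAt_vertical (hv_analytic hx).differentiableAt
    have hratio := (tendsto_div_of_hasDerivAt_of_eq_zero hdu hdv (hreal u x) (hreal v x)
      (hdv_pos hx).ne').mono_left (nhdsGT_le_nhdsNE 0)
    exact ⟨_, _, hu.fderiv_oddReflection_pos hupos isOpen_Ioo hubdry hx, hdv_pos hx, hdu, hdv,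
      hratio.congr' ((oddReflection_vertical_eventuallyEq u x).div
        (oddReflection_vertical_eventuallyEq v x))⟩
  · have hdv := hasDerivAt_vertical (hv_analytic hx).differentiableAt
    exact (analyticAt_deriv_vertical (hu_analytic hx)).div
      (analyticAt_deriv_vertical (hv_analytic hx)) (hdv.deriv.trans_ne (hdv_pos hx).ne')
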